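/- Let 0 < α < 1. Then the sequence n ↦ C_n(α) is strictly increasing for n ≥ 3; in particular C_n(α) ≥ C_3(α) = (3/5)·(2α-4)(2α-5)/((2α-2)(2α-3)) for all n ≥ 3. -/

import Mathlib

open Complex Metric Set

/-- `A_n(α) = Γ(n+1-2α)/(n! Γ(2-2α))`. -/
noncomputable def zalcA (α : ℝ) (n : ℕ) : ℝ :=
  Real.Gamma ((n : ℝ) + 1 - 2*α) / ((Nat.factorial n : ℝ) * Real.Gamma (2 - 2*α))

/-- `C_n(α) = 2 A_{2n-1}(α) / A_n(α)²`. -/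
noncomputable def zalcC (α : ℝ) (n : ℕ) : ℝ :=
  2 * zalcA α (2*n - 1) / (zalcA α n)^2

theorem zalcA_pos (α : ℝ) (hα₂ : α < 1) (n : ℕ) (hn : 1 ≤ n) : 0 < zalcA α n := by
  unfold zalcA
  have h1 : (1:ℝ) ≤ n := by exact_mod_cast hn
  have := Real.Gamma_pos_of_pos (s := (n : ℝ) + 1 - 2*α) (by linarith)
  have := Real.Gamma_pos_of_pos (s := 2 - 2*α) (by linarith)
  positivity

theorem zalcA_succ (α : ℝ) (hα₂ : α < 1) (n : ℕ) (hn : 1 ≤ n) :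
    zalcA α (n+1) = zalcA α n * (((n:ℝ) + 1 - 2*α) / (n+1)) := by
  unfold zalcA
  have h1 : (1:ℝ) ≤ n := by exact_mod_cast hn
  have h2 := Real.Gamma_pos_of_pos (s := 2 - 2*α) (by linarith)
  have h3 := Real.Gamma_add_one (s := (n : ℝ) + 1 - 2*α) (by linarith)
  rw [show ((n + 1 : ℕ) : ℝ) + 1 - 2*α = (n : ℝ) + 1 - 2*α + 1 by push_cast; ring, h3,
    Nat.factorial_succ]
  push_cast
  field_simp

theorem zalcA_one (α : ℝ) (hα₂ : α < 1) : zalcA α 1 = 1 := by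
  unfold zalcA
  have h2 := Real.Gamma_pos_of_pos (s := 2 - 2*α) (by linarith)
  rw [show ((1 : ℕ) : ℝ) + 1 - 2*α = 2 - 2 * α by push_cast; ring]
  simp [h2.ne']

theorem zalcC_step (α : ℝ) (hα₁ : 0 < α) (hα₂ : α < 1) (n : ℕ) (hn : 3 ≤ n) :
    zalcC α n < zalcC α (n+1) := by
  obtain ⟨k, rfl⟩ : ∃ k, n = k + 1 := ⟨n - 1, by omega⟩
  have hk : (2:ℝ) ≤ k := by exact_mod_cast (by omega : 2 ≤ k)
  unfold zalcC
  rw [show 2 * (k + 1 + 1) - 1 = 2*k+1+1+1 by omega, show 2 * (k + 1) - 1 = 2*k+1 by omega,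
    zalcA_succ α hα₂ (2*k+1+1) (by omega), zalcA_succ α hα₂ (2*k+1) (by omega),
    zalcA_succ α hα₂ (k+1) (by omega)]
  have hP := zalcA_pos α hα₂ (2*k+1) (by omega)
  have hQ := zalcA_pos α hα₂ (k+1) (by omega)
  generalize zalcA α (2*k+1) = P at *
  generalize zalcA α (k+1) = Q at *
  push_cast
  generalize (k:ℝ) = x at *
  have hd : 0 < x + 1 + 1 - 2*α := by linarith
  have key : 1 < (2*x+1+1-2*α)/(2*x+1+1) * ((2*x+1+1+1-2*α)/(2*x+1+1+1)) /
      ((x+1+1-2*α)/(x+1+1))^2 := by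
    rw [div_pow, div_mul_div_comm, div_div_div_eq, one_lt_div (by positivity)]
    have h : 0 < (2*α) * ((x+2)*(4*(x+1)^2-(x+1)-1) - (3*(x+1)^2-1)*(2*α)) := by
      apply mul_pos (by linarith)
      have : (3*(x+1)^2-1)*(2*α) ≤ (3*(x+1)^2-1)*2 :=
        mul_le_mul_of_nonneg_left (by linarith) (by nlinarith)
      have : 0 < (x+2)*(4*(x+1)^2-(x+1)-1) - (3*(x+1)^2-1)*2 := by
        have : 0 ≤ x := by linarith
        ring_nf
        nlinarith [pow_nonneg this 3, pow_nonneg this 2]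
      linarith
    nlinarith [h]
  calc 2 * P / Q^2 = 2 * P / Q^2 * 1 := by ring
    _ < 2 * P / Q^2 * _ := mul_lt_mul_of_pos_left key (by positivity)
    _ = _ := by field_simp

theorem stmt_6 (α : ℝ) (hα₁ : 0 < α) (hα₂ : α < 1) :
    (∀ m n : ℕ, 3 ≤ m → m < n → zalcC α m < zalcC α n) ∧
    (∀ n : ℕ, 3 ≤ n → zalcC α 3 ≤ zalcC α n) ∧
    zalcC α 3 = (3/5) * ((2*α - 4) * (2*α - 5)) / ((2*α - 2) * (2*α - 3)) := by
  have hmono : ∀ m n : ℕ, 3 ≤ m → m < n → zalcC α m < zalcC α n := by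
    intro m n hm hmn
    induction n, hmn using Nat.le_induction with
    | base => exact zalcC_step α hα₁ hα₂ m hm
    | succ n hn ih => exact ih.trans (zalcC_step α hα₁ hα₂ n (by omega))
  refine ⟨hmono, ?_, ?_⟩
  · intro n hn
    rcases hn.eq_or_lt with h | h
    · rw [h]
    · exact (hmono 3 n le_rfl h).le
  · have h2 := zalcA_succ α hα₂ 1 (by omega)
    have h3 := zalcA_succ α hα₂ 2 (by omega)
    have h4 := zalcA_succ α hα₂ 3 (by omega)
    have h5 := zalcA_succ α hα₂ 4 (by omega)
    rw [zalcA_one α hα₂] at h2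
    norm_num at h2 h3 h4 h5
    unfold zalcC
    norm_num
    rw [h5, h4, h3, h2]
    have e1 : 2*α - 2 ≠ 0 := by linarith
    have e2 : 2*α - 3 ≠ 0 := by linarith
    have e3 : 1 + 1 - 2*α ≠ 0 := by linarith
    have e4 : 2 + 1 - 2*α ≠ 0 := by linarith
    have e5 : 2 - 2*α ≠ 0 := by linarith
    have e6 : 3 - 2*α ≠ 0 := by linarith
    have e7 : 1 - α ≠ 0 := by linarith
    have e8 : α - 1 ≠ 0 := by linarith
    field_simp
    ring
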